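/- arXiv:2406.10624 — 2 statements merged into one kernel-verified Lean document; each statement's English description precedes it below -/
import Mathlib

section
/- Let C be an Ord-category, R: X ↬ Y an ideal, and f: U→X, g: V→Y morphisms. Then the relation S ↣ U×V obtained as the 2-pullback of ⟨r₁,r₂⟩: R ↣ X×Y along f×g is an ideal, and S ≅ g°∘R∘f_♯. If moreover C is a regular Ord-category, then g°∘R∘f_♯ ≅ g^*∘R∘f_*; in particular, for an ideal T: X ↬ X the inverse image f⁻¹(T) along f is an ideal and f⁻¹(T) ≅ f^*∘T∘f_*. -/
open CategoryTheory

universe w v u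

/-- An `Ord`-enrichment of a category: a preorder on each hom-set,
preserved by composition on both sides. -/
class OrdEnrichment (C : Type u) [Category.{v} C] : Type (max u v) where
  ord : ∀ {X Y : C}, (X ⟶ Y) → (X ⟶ Y) → Prop
  ord_refl : ∀ {X Y : C} (f : X ⟶ Y), ord f f
  ord_trans : ∀ {X Y : C} {f g h : X ⟶ Y}, ord f g → ord g h → ord f h
  precomp_ord : ∀ {X Y Z : C} (e : X ⟶ Y) {f g : Y ⟶ Z}, ord f g → ord (e ≫ f) (e ≫ g)
  postcomp_ord : ∀ {X Y Z : C} {f g : X ⟶ Y} (h : Y ⟶ Z), ord f g → ord (f ≫ h) (g ≫ h)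

/-- The preorder on hom-sets of an `Ord`-category. -/
def homLe {C : Type u} [Category.{v} C] [OrdEnrichment C] {X Y : C} (f g : X ⟶ Y) : Prop :=
  OrdEnrichment.ord f g

infixl:50 " ≼ " => homLe

section

variable {C : Type u} [Category.{v} C] [OrdEnrichment C]

/-- A full (ff-) morphism. -/
def IsFF {X Y : C} (m : X ⟶ Y) : Prop :=
  ∀ {A : C} (a a' : A ⟶ X), (a ≫ m) ≼ (a' ≫ m) → a ≼ a'

/-- An ff-monomorphism: a full monomorphism. -/
def IsFFMono {X Y : C} (m : X ⟶ Y) : Prop := IsFF m ∧ Mono m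

/-- An so-morphism: a morphism left orthogonal to every ff-monomorphism. -/
def IsSO {A B : C} (e : A ⟶ B) : Prop :=
  ∀ {X Y : C} (m : X ⟶ Y), IsFFMono m → ∀ (u : A ⟶ X) (v : B ⟶ Y),
    u ≫ m = e ≫ v → ∃ d : B ⟶ X, e ≫ d = u ∧ d ≫ m = v

/-- The (strict) comma object square for the ordered pair `(f, g)`. -/
structure IsCommaSq {X Y Z : C} (f : X ⟶ Y) (g : Z ⟶ Y) (P : C)
    (π₁ : P ⟶ X) (π₂ : P ⟶ Z) : Prop where
  le : (π₁ ≫ f) ≼ (π₂ ≫ g)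
  lift : ∀ {A : C} (α : A ⟶ X) (β : A ⟶ Z), (α ≫ f) ≼ (β ≫ g) →
    ∃! h : A ⟶ P, h ≫ π₁ = α ∧ h ≫ π₂ = β
  lift_ord : ∀ {A : C} {h h' : A ⟶ P}, (h ≫ π₁) ≼ (h' ≫ π₁) → (h ≫ π₂) ≼ (h' ≫ π₂) → h ≼ h'

/-- A 2-pullback square (pullback with the `Ord`-enriched universal property). -/
structure Is2Pullback {X Y Z : C} (f : X ⟶ Z) (g : Y ⟶ Z) (P : C)
    (p : P ⟶ X) (q : P ⟶ Y) : Prop where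
  comm : p ≫ f = q ≫ g
  lift : ∀ {A : C} (a : A ⟶ X) (b : A ⟶ Y), a ≫ f = b ≫ g →
    ∃! h : A ⟶ P, h ≫ p = a ∧ h ≫ q = b
  lift_ord : ∀ {A : C} {h h' : A ⟶ P}, (h ≫ p) ≼ (h' ≫ p) → (h ≫ q) ≼ (h' ≫ q) → h ≼ h'

/-- A binary 2-product. -/
structure Is2Product (X Y : C) (P : C) (p : P ⟶ X) (q : P ⟶ Y) : Prop where
  lift : ∀ {A : C} (a : A ⟶ X) (b : A ⟶ Y), ∃! h : A ⟶ P, h ≫ p = a ∧ h ≫ q = b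
  lift_ord : ∀ {A : C} {h h' : A ⟶ P}, (h ≫ p) ≼ (h' ≫ p) → (h ≫ q) ≼ (h' ≫ q) → h ≼ h'

/-- A 2-equalizer. -/
structure Is2Equalizer {X Y : C} (f g : X ⟶ Y) (E : C) (i : E ⟶ X) : Prop where
  comm : i ≫ f = i ≫ g
  lift : ∀ {A : C} (a : A ⟶ X), a ≫ f = a ≫ g → ∃! h : A ⟶ E, h ≫ i = a
  lift_ord : ∀ {A : C} {h h' : A ⟶ E}, (h ≫ i) ≼ (h' ≫ i) → h ≼ h'

/-- A bicoinserter of a parallel pair. -/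
structure IsBicoinserter {X A E : C} (a b : X ⟶ A) (e : A ⟶ E) : Prop where
  le : (a ≫ e) ≼ (b ≫ e)
  desc : ∀ {F : C} (f : A ⟶ F), (a ≫ f) ≼ (b ≫ f) →
    ∃ t : E ⟶ F, (e ≫ t) ≼ f ∧ f ≼ (e ≫ t)
  desc_ord : ∀ {F : C} {f f' : A ⟶ F} {t t' : E ⟶ F},
    (e ≫ t) ≼ f → f ≼ (e ≫ t) → (e ≫ t') ≼ f' → f' ≼ (e ≫ t') → f ≼ f' → t ≼ t'

/-- A relation from `X` to `Y` in an `Ord`-category: a jointly ff-monomorphic span. -/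
structure RelStr (X Y : C) : Type (max u v) where
  obj : C
  p : obj ⟶ X
  q : obj ⟶ Y
  jointly_ff : ∀ {A : C} (a a' : A ⟶ obj), (a ≫ p) ≼ (a' ≫ p) → (a ≫ q) ≼ (a' ≫ q) → a ≼ a'
  jointly_mono : ∀ {A : C} (a a' : A ⟶ obj), a ≫ p = a' ≫ p → a ≫ q = a' ≫ q → a = a'

/-- `(x, y) ∈_A R`. -/
def RelStr.Mem {X Y : C} (R : RelStr X Y) {A : C} (x : A ⟶ X) (y : A ⟶ Y) : Prop :=
  ∃ h : A ⟶ R.obj, h ≫ R.p = x ∧ h ≫ R.q = y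

/-- `R ⊆ S`: `R` factors through `S` (over `X × Y`). -/
def RelStr.Sub {X Y : C} (R S : RelStr X Y) : Prop :=
  ∃ φ : R.obj ⟶ S.obj, φ ≫ S.p = R.p ∧ φ ≫ S.q = R.q

/-- `R ≅ S`: mutual factorisation. -/
def RelStr.Iso {X Y : C} (R S : RelStr X Y) : Prop := R.Sub S ∧ S.Sub R

/-- The opposite relation `R°`. -/
def RelStr.op {X Y : C} (R : RelStr X Y) : RelStr Y X where
  obj := R.obj
  p := R.q
  q := R.p
  jointly_ff := fun a a' h1 h2 => R.jointly_ff a a' h2 h1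
  jointly_mono := fun a a' h1 h2 => R.jointly_mono a a' h2 h1

/-- A relation is an (order) ideal when it is closed under lowering the first
coordinate and raising the second coordinate. -/
def IsIdealRel {X Y : C} (R : RelStr X Y) : Prop :=
  ∀ {A : C} (x x' : A ⟶ X) (y y' : A ⟶ Y), x' ≼ x → R.Mem x y → y ≼ y' → R.Mem x' y'

/-- The relation `f_♯` given by the span `(1_X, f)`. -/
def sharpRel {X Y : C} (f : X ⟶ Y) : RelStr X Y where
  obj := X
  p := 𝟙 X
  q := f
  jointly_ff := fun a a' h1 _ => by simpa using h1
  jointly_mono := fun a a' h1 _ => by simpa using h1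

/-- The relation `f°`, the opposite of `f_♯`. -/
def cosharpRel {X Y : C} (f : X ⟶ Y) : RelStr Y X := (sharpRel f).op

/-- `M` is the meet (intersection) `R ∧ S` of two relations. -/
def IsMeetRel {X Y : C} (R S M : RelStr X Y) : Prop :=
  M.Sub R ∧ M.Sub S ∧
    ∀ {A : C} (x : A ⟶ X) (y : A ⟶ Y), R.Mem x y → S.Mem x y → M.Mem x y

/-- `T` is the composite `S ∘ R` of the relations `R : X ↬ Y` and `S : Y ↬ Z`,
obtained via the (so-morphism, ff-monomorphism) factorisation of the span
given by the 2-pullback over the middle object. -/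
def IsCompositeRel {X Y Z : C} (R : RelStr X Y) (S : RelStr Y Z) (T : RelStr X Z) : Prop :=
  ∃ (P : C) (p₁ : P ⟶ R.obj) (p₂ : P ⟶ S.obj) (e : P ⟶ T.obj),
    Is2Pullback R.q S.p P p₁ p₂ ∧ IsSO e ∧ e ≫ T.p = p₁ ≫ R.p ∧ e ≫ T.q = p₂ ≫ S.q

/-- `R` is the ideal `f_* = f / 1_Y : X ↬ Y`. -/
def IsStarRel {X Y : C} (f : X ⟶ Y) (R : RelStr X Y) : Prop :=
  IsCommaSq f (𝟙 Y) R.obj R.p R.q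

/-- `R` is the ideal `f^* = 1_Y / f : Y ↬ X`. -/
def IsCostarRel {X Y : C} (f : X ⟶ Y) (R : RelStr Y X) : Prop :=
  IsCommaSq (𝟙 Y) f R.obj R.p R.q

/-- `R` is the identity ideal `I_X = 1_X / 1_X`. -/
def IsIdRel (X : C) (R : RelStr X X) : Prop :=
  IsCommaSq (𝟙 X) (𝟙 X) R.obj R.p R.q

/-- `S` is the 2-pullback of the relation `R ↣ X × Y` along `f × g`. -/
def IsRelPullback {X Y U V : C} (R : RelStr X Y) (f : U ⟶ X) (g : V ⟶ Y)
    (S : RelStr U V) : Prop :=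
  ∃ h : S.obj ⟶ R.obj, h ≫ R.p = S.p ≫ f ∧ h ≫ R.q = S.q ≫ g ∧
    ∀ {A : C} (a : A ⟶ U) (b : A ⟶ V) (c : A ⟶ R.obj),
      c ≫ R.p = a ≫ f → c ≫ R.q = b ≫ g →
      ∃ d : A ⟶ S.obj, d ≫ S.p = a ∧ d ≫ S.q = b ∧ d ≫ h = c

/-- A binary 2-coproduct. -/
structure Is2Coproduct (X Y : C) (P : C) (i : X ⟶ P) (j : Y ⟶ P) : Prop where
  desc : ∀ {A : C} (a : X ⟶ A) (b : Y ⟶ A), ∃! h : P ⟶ A, i ≫ h = a ∧ j ≫ h = b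
  desc_ord : ∀ {A : C} {h h' : P ⟶ A}, (i ≫ h) ≼ (i ≫ h') → (j ≫ h) ≼ (j ≫ h') → h ≼ h'

/-- A ternary 2-coproduct. -/
structure Is3Coproduct (X Y Z : C) (P : C) (i : X ⟶ P) (j : Y ⟶ P) (k : Z ⟶ P) : Prop where
  desc : ∀ {A : C} (a : X ⟶ A) (b : Y ⟶ A) (c : Z ⟶ A),
    ∃! h : P ⟶ A, i ≫ h = a ∧ j ≫ h = b ∧ k ≫ h = c
  desc_ord : ∀ {A : C} {h h' : P ⟶ A},
    (i ≫ h) ≼ (i ≫ h') → (j ≫ h) ≼ (j ≫ h') → (k ≫ h) ≼ (k ≫ h') → h ≼ h'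

/-- Reflexivity of a relation on `X`: the diagonal factors through it. -/
def ReflexiveRel {X : C} (R : RelStr X X) : Prop := R.Mem (𝟙 X) (𝟙 X)

/-- Transitivity of a relation on `X`: `R ∘ R ⊆ R`. -/
def TransitiveRel {X : C} (R : RelStr X X) : Prop :=
  ∀ T : RelStr X X, IsCompositeRel R R T → T.Sub R

/-- A congruence: a reflexive and transitive ideal. -/
def IsCongruence {X : C} (R : RelStr X X) : Prop :=
  IsIdealRel R ∧ ReflexiveRel R ∧ TransitiveRel R

/-- An effective congruence: `R ≅ f^* ∘ f_*` for some morphism `f`. -/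
def EffectiveCongruence {X : C} (R : RelStr X X) : Prop :=
  ∃ (Y : C) (f : X ⟶ Y) (Fstar : RelStr X Y) (Fco : RelStr Y X) (T : RelStr X X),
    IsStarRel f Fstar ∧ IsCostarRel f Fco ∧ IsCompositeRel Fstar Fco T ∧ R.Iso T

/-- The `Ord`-enriched difunctionality property of a relation. -/
def OrdDifunctional {X Y : C} (D : RelStr X Y) : Prop :=
  ∀ {A : C} (x u u' : A ⟶ X) (y y' v : A ⟶ Y),
    D.Mem x y → y ≼ y' → D.Mem u y' → u ≼ u' → D.Mem u' v → D.Mem x v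

end

/-- A regular `Ord`-category: finite weighted limits, an
(so-morphism, ff-monomorphism) factorisation system, so-morphisms stable under
2-pullbacks, and every so-morphism the bicoinserter of its comma object projections. -/
structure IsRegularOrd (C : Type u) [Category.{v} C] [OrdEnrichment C] : Prop where
  hasTerminal : ∃ T : C, ∀ A : C, ∃ f : A ⟶ T, ∀ g : A ⟶ T, g = f
  has2Products : ∀ X Y : C, ∃ (P : C) (p : P ⟶ X) (q : P ⟶ Y), Is2Product X Y P p q
  has2Equalizers : ∀ {X Y : C} (f g : X ⟶ Y), ∃ (E : C) (i : E ⟶ X), Is2Equalizer f g E i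
  has2Pullbacks : ∀ {X Y Z : C} (f : X ⟶ Z) (g : Y ⟶ Z),
    ∃ (P : C) (p : P ⟶ X) (q : P ⟶ Y), Is2Pullback f g P p q
  hasCommaObjects : ∀ {X Y Z : C} (f : X ⟶ Y) (g : Z ⟶ Y),
    ∃ (P : C) (p : P ⟶ X) (q : P ⟶ Z), IsCommaSq f g P p q
  fact : ∀ {X Y : C} (f : X ⟶ Y), ∃ (I : C) (e : X ⟶ I) (m : I ⟶ Y),
    IsSO e ∧ IsFFMono m ∧ e ≫ m = f
  so_pullback_stable : ∀ {X Y Z P : C} (f : X ⟶ Z) (g : Y ⟶ Z) (p : P ⟶ X) (q : P ⟶ Y),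
    Is2Pullback f g P p q → IsSO g → IsSO p
  so_bicoinserter : ∀ {A B P : C} (e : A ⟶ B), IsSO e →
    ∀ (π₁ π₂ : P ⟶ A), IsCommaSq e e P π₁ π₂ → IsBicoinserter π₁ π₂ e

/-- An `Ord`-Mal'tsev category: every ideal is `Ord`-difunctional. -/
def IsOrdMaltsev (C : Type u) [Category.{v} C] [OrdEnrichment C] : Prop :=
  ∀ (X Y : C) (D : RelStr X Y), IsIdealRel D → OrdDifunctional D

/-- An `Ord`-W-Mal'tsev object: every ideal is `Ord`-difunctional with respect to
generalised elements with domain `Y`. -/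
def IsOrdWMaltsevObj {C : Type u} [Category.{v} C] [OrdEnrichment C] (Y : C) : Prop :=
  ∀ (X Z : C) (R : RelStr X Z), IsIdealRel R →
    ∀ (x u u' : Y ⟶ X) (z z' v : Y ⟶ Z),
      R.Mem x z → z ≼ z' → R.Mem u z' → u ≼ u' → R.Mem u' v → R.Mem x v


/-!
Everything is checked on generalised elements: relations are isomorphic exactly when they have the
same ones, and `S` has those `(a, b)` with `(f a, g b) ∈ R`.

The span underlying `R ∘ f_♯` is already jointly ff-monomorphic, so the so-part of its
factorisation is invertible and `(x, y) ∈ R ∘ f_♯` means `(f x, y) ∈ R`; dually for `g°`. For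
`R ∘ f_*` the span need not be jointly ff-monomorphic. There an ideal `R` absorbs the inequality
`f x ≼ x'` defining `f_*`, so the span satisfies `(f x, y) ∈ R`, and this passes to its so-image
because `⟨r₁, r₂⟩` is an ff-monomorphism into `X × Y`, to which so-morphisms are orthogonal.
-/

section

variable {C : Type u} [Category.{v} C] [OrdEnrichment C]

namespace homLe

theorem refl {X Y : C} (f : X ⟶ Y) : f ≼ f := OrdEnrichment.ord_refl f

theorem whiskerLeft {X Y Z : C} (e : X ⟶ Y) {f g : Y ⟶ Z} (h : f ≼ g) : (e ≫ f) ≼ (e ≫ g) :=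
  OrdEnrichment.precomp_ord e h

theorem whiskerRight {X Y Z : C} {f g : X ⟶ Y} (h : f ≼ g) (k : Y ⟶ Z) : (f ≫ k) ≼ (g ≫ k) :=
  OrdEnrichment.postcomp_ord k h

end homLe

theorem IsCommaSq.exists_lift_iff {X Y Z P : C} {f : X ⟶ Y} {g : Z ⟶ Y} {π₁ : P ⟶ X} {π₂ : P ⟶ Z}
    (hP : IsCommaSq f g P π₁ π₂) {A : C} {α : A ⟶ X} {β : A ⟶ Z} :
    (∃ h : A ⟶ P, h ≫ π₁ = α ∧ h ≫ π₂ = β) ↔ (α ≫ f) ≼ (β ≫ g) := by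
  refine ⟨?_, fun h => (hP.lift α β h).exists⟩
  rintro ⟨h, rfl, rfl⟩
  simpa only [Category.assoc] using hP.le.whiskerLeft h

theorem Is2Product.hom_ext {X Y P : C} {p : P ⟶ X} {q : P ⟶ Y} (hP : Is2Product X Y P p q)
    {A : C} {h h' : A ⟶ P} (hp : h ≫ p = h' ≫ p) (hq : h ≫ q = h' ≫ q) : h = h' :=
  (hP.lift _ _).unique ⟨hp, hq⟩ ⟨rfl, rfl⟩

namespace Is2Pullback

variable {X Y Z P : C} {f : X ⟶ Z} {g : Y ⟶ Z} {p : P ⟶ X} {q : P ⟶ Y}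

theorem hom_ext (hP : Is2Pullback f g P p q) {A : C} {h h' : A ⟶ P}
    (hp : h ≫ p = h' ≫ p) (hq : h ≫ q = h' ≫ q) : h = h' :=
  (hP.lift (h' ≫ p) (h' ≫ q) (by simp only [Category.assoc, hP.comm])).unique
    ⟨hp, hq⟩ ⟨rfl, rfl⟩

theorem symm (hP : Is2Pullback f g P p q) : Is2Pullback g f P q p where
  comm := hP.comm.symm
  lift b a h := by simpa only [and_comm] using hP.lift a b h.symm
  lift_ord hq hp := hP.lift_ord hp hq

end Is2Pullback

namespace RelStr

variable {X Y : C} {R S T : RelStr X Y}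

theorem mem_self (R : RelStr X Y) : R.Mem R.p R.q :=
  ⟨𝟙 _, Category.id_comp _, Category.id_comp _⟩

theorem Mem.comp {A B : C} {x : A ⟶ X} {y : A ⟶ Y} (h : R.Mem x y) (b : B ⟶ A) :
    R.Mem (b ≫ x) (b ≫ y) := by
  obtain ⟨k, rfl, rfl⟩ := h
  exact ⟨b ≫ k, Category.assoc _ _ _, Category.assoc _ _ _⟩

theorem mem_op {A : C} {x : A ⟶ X} {y : A ⟶ Y} : R.op.Mem y x ↔ R.Mem x y :=
  exists_congr fun _ => and_comm

theorem Sub.mem (hRS : R.Sub S) {A : C} {x : A ⟶ X} {y : A ⟶ Y} (h : R.Mem x y) : S.Mem x y := by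
  obtain ⟨k, rfl, rfl⟩ := h
  exact Mem.comp hRS k

theorem iso_of_forall_mem_iff
    (h : ∀ {A : C} (x : A ⟶ X) (y : A ⟶ Y), R.Mem x y ↔ S.Mem x y) : R.Iso S :=
  ⟨(h _ _).1 R.mem_self, (h _ _).2 S.mem_self⟩

theorem Iso.symm (h : R.Iso S) : S.Iso R := And.symm h

theorem Iso.trans (h : R.Iso S) (h' : S.Iso T) : R.Iso T :=
  ⟨h'.1.mem h.1, h.2.mem h'.2⟩

theorem isFFMono_of_comp_eq {P : C} {m : R.obj ⟶ P} {p : P ⟶ X} {q : P ⟶ Y}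
    (hp : m ≫ p = R.p) (hq : m ≫ q = R.q) : IsFFMono m := by
  refine ⟨fun a a' h => R.jointly_ff a a' ?_ ?_, ⟨fun a a' h => R.jointly_mono a a' ?_ ?_⟩⟩
  · simpa only [Category.assoc, hp] using h.whiskerRight p
  · simpa only [Category.assoc, hq] using h.whiskerRight q
  · simpa only [Category.assoc, hp] using h =≫ p
  · simpa only [Category.assoc, hq] using h =≫ q

theorem sub_of_isSO {e : R.obj ⟶ S.obj} (he : IsSO e) (hp : e ≫ S.p = R.p)
    (hq : e ≫ S.q = R.q) : S.Sub R := by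
  obtain ⟨d, -, hd⟩ : ∃ d : S.obj ⟶ R.obj, e ≫ d = 𝟙 _ ∧ d ≫ e = 𝟙 _ :=
    he e (isFFMono_of_comp_eq hp hq) _ _ (by rw [Category.id_comp, Category.comp_id])
  exact ⟨d, by rw [← hp, reassoc_of% hd], by rw [← hq, reassoc_of% hd]⟩

theorem mem_of_isSO {P : C} {p : P ⟶ X} {q : P ⟶ Y} (hP : Is2Product X Y P p q)
    {A B : C} {e : A ⟶ B} (he : IsSO e) {x : B ⟶ X} {y : B ⟶ Y}
    (h : R.Mem (e ≫ x) (e ≫ y)) : R.Mem x y := by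
  obtain ⟨m, ⟨hmp, hmq⟩, -⟩ := hP.lift R.p R.q
  obtain ⟨w, ⟨rfl, rfl⟩, -⟩ := hP.lift x y
  obtain ⟨k, hkp, hkq⟩ := h
  have hsq : k ≫ m = e ≫ w :=
    hP.hom_ext (by simp only [Category.assoc, hmp, hkp]) (by simp only [Category.assoc, hmq, hkq])
  obtain ⟨d, -, rfl⟩ := he m (isFFMono_of_comp_eq hmp hmq) k w hsq
  exact ⟨d, by rw [Category.assoc, hmp], by rw [Category.assoc, hmq]⟩

/-- The span underlying the composite `R ∘ f_♯`, as a relation: the 2-pullback of `r₁` along `f`,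
with `r₂` as its second leg. -/
def pullbackLeft {U P : C} (R : RelStr X Y) {f : U ⟶ X} {p₁ : P ⟶ U} {p₂ : P ⟶ R.obj}
    (hP : Is2Pullback f R.p P p₁ p₂) : RelStr U Y where
  obj := P
  p := p₁
  q := p₂ ≫ R.q
  jointly_ff a a' hp hq := hP.lift_ord hp <| R.jointly_ff _ _
    (by simpa only [Category.assoc, hP.comm] using hp.whiskerRight f)
    (by simpa only [Category.assoc] using hq)
  jointly_mono a a' hp hq := hP.hom_ext hp <| R.jointly_mono _ _
    (by simpa only [Category.assoc, hP.comm] using hp =≫ f)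
    (by simpa only [Category.assoc] using hq)

theorem mem_of_mem_pullbackLeft {U P : C} {f : U ⟶ X} {p₁ : P ⟶ U} {p₂ : P ⟶ R.obj}
    {hP : Is2Pullback f R.p P p₁ p₂} {A : C} {x : A ⟶ U} {y : A ⟶ Y}
    (h : (R.pullbackLeft hP).Mem x y) : R.Mem (x ≫ f) y := by
  obtain ⟨(k : A ⟶ P), rfl, rfl⟩ := h
  have hk : (k ≫ p₂) ≫ R.p = (k ≫ p₁) ≫ f := by simp only [Category.assoc, hP.comm]
  exact ⟨k ≫ p₂, hk, Category.assoc _ _ _⟩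

end RelStr

theorem mem_sharpRel {X Y A : C} {f : X ⟶ Y} {x : A ⟶ X} {y : A ⟶ Y} :
    (sharpRel f).Mem x y ↔ x ≫ f = y := by
  simp [RelStr.Mem, sharpRel]

theorem IsStarRel.mem_iff {X Y : C} {f : X ⟶ Y} {F : RelStr X Y} (hF : IsStarRel f F)
    {A : C} {x : A ⟶ X} {y : A ⟶ Y} : F.Mem x y ↔ (x ≫ f) ≼ y := by
  simpa only [RelStr.Mem, Category.comp_id] using IsCommaSq.exists_lift_iff hF

theorem IsCostarRel.mem_iff {X Y : C} {f : X ⟶ Y} {F : RelStr Y X} (hF : IsCostarRel f F)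
    {A : C} {y : A ⟶ Y} {x : A ⟶ X} : F.Mem y x ↔ y ≼ (x ≫ f) := by
  simpa only [RelStr.Mem, Category.comp_id] using IsCommaSq.exists_lift_iff hF

namespace IsCompositeRel

section

variable {X Y Z : C} {R : RelStr X Y} {S : RelStr Y Z} {T : RelStr X Z}

theorem op (h : IsCompositeRel R S T) : IsCompositeRel S.op R.op T.op := by
  obtain ⟨P, p₁, p₂, e, hP, he, hep, heq⟩ := h
  exact ⟨P, p₂, p₁, e, hP.symm, he, heq, hep⟩

theorem mem (h : IsCompositeRel R S T) {A : C} {x : A ⟶ X} {y : A ⟶ Y} {z : A ⟶ Z}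
    (hxy : R.Mem x y) (hyz : S.Mem y z) : T.Mem x z := by
  obtain ⟨P, p₁, p₂, e, hP, -, hep, heq⟩ := h
  obtain ⟨a, rfl, ha⟩ := hxy
  obtain ⟨b, hb, rfl⟩ := hyz
  obtain ⟨k, ⟨rfl, rfl⟩, -⟩ := hP.lift a b (ha.trans hb.symm)
  exact ⟨k ≫ e, by simp only [Category.assoc, hep], by simp only [Category.assoc, heq]⟩

theorem mem_map {X' Z' P : C} {p : P ⟶ X'} {q : P ⟶ Z'} (hP : Is2Product X' Z' P p q)
    (h : IsCompositeRel R S T) {Q : RelStr X' Z'} {f : X ⟶ X'} {g : Z ⟶ Z'}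
    (hQ : ∀ {A : C} {x : A ⟶ X} {y : A ⟶ Y} {z : A ⟶ Z},
      R.Mem x y → S.Mem y z → Q.Mem (x ≫ f) (z ≫ g))
    {A : C} {x : A ⟶ X} {z : A ⟶ Z} (hxz : T.Mem x z) : Q.Mem (x ≫ f) (z ≫ g) := by
  obtain ⟨W, p₁, p₂, e, hW, he, hep, heq⟩ := h
  obtain ⟨k, rfl, rfl⟩ := hxz
  have hspan : Q.Mem ((p₁ ≫ R.p) ≫ f) ((p₂ ≫ S.q) ≫ g) :=
    hQ (R.mem_self.comp p₁) (hW.comm ▸ S.mem_self.comp p₂)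
  have himage : Q.Mem (T.p ≫ f) (T.q ≫ g) :=
    RelStr.mem_of_isSO hP he (by simpa only [← hep, ← heq, Category.assoc] using hspan)
  simpa only [Category.assoc] using himage.comp k

end

variable {X Y U V : C}

theorem mem_iff_of_sharpRel {R : RelStr X Y} {f : U ⟶ X} {T : RelStr U Y}
    (h : IsCompositeRel (sharpRel f) R T) {A : C} {x : A ⟶ U} {y : A ⟶ Y} :
    T.Mem x y ↔ R.Mem (x ≫ f) y := by
  refine ⟨fun hxy => ?_, h.mem (mem_sharpRel.2 rfl)⟩
  obtain ⟨P, p₁, p₂, e, hP, he, hep, heq⟩ := h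
  have hsub : T.Sub (R.pullbackLeft hP) :=
    RelStr.sub_of_isSO he (hep.trans (Category.comp_id p₁)) heq
  exact RelStr.mem_of_mem_pullbackLeft (hsub.mem hxy)

theorem mem_iff_of_cosharpRel {R : RelStr U Y} {g : V ⟶ Y} {T : RelStr U V}
    (h : IsCompositeRel R (cosharpRel g) T) {A : C} {x : A ⟶ U} {y : A ⟶ V} :
    T.Mem x y ↔ R.Mem x (y ≫ g) :=
  calc
    T.Mem x y ↔ T.op.Mem y x := RelStr.mem_op.symm
    _ ↔ R.op.Mem (y ≫ g) x := mem_iff_of_sharpRel (f := g) h.op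
    _ ↔ R.Mem x (y ≫ g) := RelStr.mem_op

theorem mem_of_isStarRel {R : RelStr X Y} (hR : IsIdealRel R) {P : C} {p : P ⟶ X} {q : P ⟶ Y}
    (hP : Is2Product X Y P p q) {f : U ⟶ X} {F : RelStr U X} (hF : IsStarRel f F)
    {T : RelStr U Y} (h : IsCompositeRel F R T) {A : C} {x : A ⟶ U} {y : A ⟶ Y}
    (hxy : T.Mem x y) : R.Mem (x ≫ f) y := by
  rw [← Category.comp_id y]
  refine h.mem_map hP (fun hF' hR' => ?_) hxy
  rw [Category.comp_id]
  exact hR _ _ _ _ (hF.mem_iff.1 hF') hR' (.refl _)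

theorem mem_iff_of_isStarRel_of_isCostarRel {R : RelStr X Y} (hR : IsIdealRel R)
    {P : C} {p : P ⟶ X} {q : P ⟶ Y} (hP : Is2Product X Y P p q)
    {f : U ⟶ X} {g : V ⟶ Y} {F : RelStr U X} {G : RelStr Y V}
    (hF : IsStarRel f F) (hG : IsCostarRel g G) {T₁ : RelStr U Y} {T₂ : RelStr U V}
    (h₁ : IsCompositeRel F R T₁) (h₂ : IsCompositeRel T₁ G T₂)
    {A : C} {x : A ⟶ U} {y : A ⟶ V} : T₂.Mem x y ↔ R.Mem (x ≫ f) (y ≫ g) := by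
  constructor
  · exact h₂.mem_map hP fun hT hG' =>
      hR _ _ _ _ (.refl _) (h₁.mem_of_isStarRel hR hP hF hT) (hG.mem_iff.1 hG')
  · exact fun h => h₂.mem (h₁.mem (hF.mem_iff.2 (.refl _)) h) (hG.mem_iff.2 (.refl _))

end IsCompositeRel

namespace IsRelPullback

variable {X Y U V : C} {R : RelStr X Y} {f : U ⟶ X} {g : V ⟶ Y} {S : RelStr U V}

theorem mem_iff (hS : IsRelPullback R f g S) {A : C} {a : A ⟶ U} {b : A ⟶ V} :
    S.Mem a b ↔ R.Mem (a ≫ f) (b ≫ g) := by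
  obtain ⟨h, hp, hq, hlift⟩ := hS
  constructor
  · rintro ⟨k, rfl, rfl⟩
    exact ⟨k ≫ h, by simp only [Category.assoc, hp], by simp only [Category.assoc, hq]⟩
  · rintro ⟨c, hcp, hcq⟩
    obtain ⟨d, hdp, hdq, -⟩ := hlift a b c hcp hcq
    exact ⟨d, hdp, hdq⟩

theorem isIdealRel (hS : IsRelPullback R f g S) (hR : IsIdealRel R) : IsIdealRel S := by
  intro A x x' y y' hx hxy hy
  exact hS.mem_iff.2 (hR _ _ _ _ (hx.whiskerRight f) (hS.mem_iff.1 hxy) (hy.whiskerRight g))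

end IsRelPullback

end

theorem statement10_general {C : Type u} [Category.{v} C] [OrdEnrichment C]
    {X Y U V : C} {R : RelStr X Y} (hR : IsIdealRel R)
    {f : U ⟶ X} {g : V ⟶ Y} {S : RelStr U V} (hS : IsRelPullback R f g S) :
    IsIdealRel S ∧
    (∀ (T₁ : RelStr U Y) (T₂ : RelStr U V),
      IsCompositeRel (sharpRel f) R T₁ → IsCompositeRel T₁ (cosharpRel g) T₂ → S.Iso T₂) ∧
    ((∃ (P : C) (p : P ⟶ X) (q : P ⟶ Y), Is2Product X Y P p q) →
      ∀ (F : RelStr U X) (G : RelStr Y V) (T₁ : RelStr U Y) (T₂ : RelStr U V),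
        IsStarRel f F → IsCostarRel g G →
        IsCompositeRel F R T₁ → IsCompositeRel T₁ G T₂ → S.Iso T₂) := by
  refine ⟨hS.isIdealRel hR, fun T₁ T₂ h₁ h₂ => ?_, fun ⟨P, p, q, hP⟩ F G T₁ T₂ hF hG h₁ h₂ => ?_⟩
  · refine RelStr.iso_of_forall_mem_iff fun x y => ?_
    rw [hS.mem_iff, h₂.mem_iff_of_cosharpRel, h₁.mem_iff_of_sharpRel]
  · refine RelStr.iso_of_forall_mem_iff fun x y => ?_
    rw [hS.mem_iff, h₁.mem_iff_of_isStarRel_of_isCostarRel hR hP hF hG h₂]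

/-- The 2-pullback of an ideal along `f × g` is an ideal isomorphic to `g° ∘ R ∘ f_♯`;
in the regular case it is also `g^* ∘ R ∘ f_*`; in particular inverse images of
ideals are ideals, with `f⁻¹(T) ≅ f^* ∘ T ∘ f_*`. -/
theorem statement10 {C : Type u} [Category.{v} C] [OrdEnrichment C]
    {X Y U V : C} (R : RelStr X Y) (hR : IsIdealRel R)
    (f : U ⟶ X) (g : V ⟶ Y) (S : RelStr U V) (hS : IsRelPullback R f g S) :
    IsIdealRel S ∧
    (∀ (T1 : RelStr U Y) (T2 : RelStr U V),
      IsCompositeRel (sharpRel f) R T1 → IsCompositeRel T1 (cosharpRel g) T2 →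
      S.Iso T2) ∧
    (IsRegularOrd C →
      (∀ (Fstar : RelStr U X) (Gco : RelStr Y V)
         (T1 : RelStr U Y) (T2 : RelStr U V) (T1' : RelStr U Y) (T2' : RelStr U V),
        IsStarRel f Fstar → IsCostarRel g Gco →
        IsCompositeRel (sharpRel f) R T1 → IsCompositeRel T1 (cosharpRel g) T2 →
        IsCompositeRel Fstar R T1' → IsCompositeRel T1' Gco T2' →
        T2.Iso T2') ∧
      (∀ (Tid : RelStr X X), IsIdealRel Tid →
        ∀ (S' : RelStr U U), IsRelPullback Tid f f S' →
          IsIdealRel S' ∧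
          ∀ (Fstar : RelStr U X) (Fco : RelStr X U)
            (W1 : RelStr U X) (W2 : RelStr U U),
            IsStarRel f Fstar → IsCostarRel f Fco →
            IsCompositeRel Fstar Tid W1 → IsCompositeRel W1 Fco W2 →
            S'.Iso W2)) := by
  obtain ⟨hideal, hsharp, hstar⟩ := statement10_general hR hS
  refine ⟨hideal, hsharp, fun hC => ⟨?_, fun T hT S' hS' => ?_⟩⟩
  · exact fun F G T₁ T₂ T₁' T₂' hF hG h₁ h₂ h₁' h₂' =>
      (hsharp T₁ T₂ h₁ h₂).symm.trans (hstar (hC.has2Products X Y) F G T₁' T₂' hF hG h₁' h₂')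
  · exact (statement10_general hT hS').imp_right fun h => h.2 (hC.has2Products X X)
end

section
/- Let V be a unital and integral quantale and Y a V-category. Then the inequality Y(y₁,y₂') ∧ Y(y₂,y₂') ∧ Y(y₂,y₁') ≤ Y(y₁,y₁') holds for all y₁,y₂,y₁',y₂' ∈ Y if and only if Y is a symmetric V_∧-category, i.e. Y(x,y) = Y(y,x) and Y(x,y) ∧ Y(y,z) ≤ Y(x,z) for all x,y,z ∈ Y. -/
/-- A unital and integral quantale: a complete lattice with an associative
multiplication preserving arbitrary joins in each variable, whose unit is the
top element. -/
structure QuantaleStr (V : Type w) [CompleteLattice V] : Type w where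
  mul : V → V → V
  mul_assoc : ∀ a b c : V, mul (mul a b) c = mul a (mul b c)
  mul_sSup : ∀ (a : V) (s : Set V), mul a (sSup s) = ⨆ b ∈ s, mul a b
  sSup_mul : ∀ (s : Set V) (a : V), mul (sSup s) a = ⨆ b ∈ s, mul b a
  top_mul : ∀ a : V, mul ⊤ a = a
  mul_top : ∀ a : V, mul a ⊤ = a

/-- A `V`-category for a unital and integral quantale `V` (the unit `k` is `⊤`). -/
structure VCatStr {V : Type w} [CompleteLattice V] (Q : QuantaleStr V) :
    Type (max w (u + 1)) where
  carrier : Type u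
  hom : carrier → carrier → V
  refl_le : ∀ x, ⊤ ≤ hom x x
  comp_le : ∀ x y z, Q.mul (hom x y) (hom y z) ≤ hom x z

/-- `Y` is a symmetric `V_∧`-category. -/
def IsSymmetricVMeetCat {V : Type w} [CompleteLattice V] {Q : QuantaleStr V}
    (Y : VCatStr.{w, u} Q) : Prop :=
  (∀ x y : Y.carrier, Y.hom x y = Y.hom y x) ∧
    ∀ x y z : Y.carrier, Y.hom x y ⊓ Y.hom y z ≤ Y.hom x z

/-- Difunctionality of an `L`-valued relation: whenever `x` is related to `y'`, `x'` to `y'` and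
`x'` to `y`, also `x` is related to `y`. A crisp relation is the case `L = Prop`. -/
def IsDifunctional {X Y L : Type*} [SemilatticeInf L] (r : X → Y → L) : Prop :=
  ∀ (x x' : X) (y y' : Y), r x y' ⊓ r x' y' ⊓ r x' y ≤ r x y

namespace IsDifunctional

variable {X L : Type*} [SemilatticeInf L]

theorem of_symm_of_trans {r : X → X → L} (hsymm : ∀ x y, r x y = r y x)
    (htrans : ∀ x y z, r x y ⊓ r y z ≤ r x z) : IsDifunctional r := fun x x' y y' =>
  calc r x y' ⊓ r x' y' ⊓ r x' y
    _ = r x y' ⊓ r y' x' ⊓ r x' y := by rw [hsymm x' y']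
    _ ≤ r x x' ⊓ r x' y := inf_le_inf_right _ (htrans x y' x')
    _ ≤ r x y := htrans x x' y

variable [OrderTop L] {r : X → X → L}

theorem le_swap (h : IsDifunctional r) (hrefl : ∀ x, r x x = ⊤) (x y : X) : r x y ≤ r y x :=
  calc r x y
    _ = r y y ⊓ r x y ⊓ r x x := by rw [hrefl, hrefl, top_inf_eq, inf_top_eq]
    _ ≤ r y x := h y x x y

theorem symm (h : IsDifunctional r) (hrefl : ∀ x, r x x = ⊤) (x y : X) : r x y = r y x :=
  le_antisymm (h.le_swap hrefl x y) (h.le_swap hrefl y x)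

theorem trans (h : IsDifunctional r) (hrefl : ∀ x, r x x = ⊤) (x y z : X) :
    r x y ⊓ r y z ≤ r x z :=
  calc r x y ⊓ r y z
    _ = r x y ⊓ r y y ⊓ r y z := by rw [hrefl, inf_top_eq]
    _ ≤ r x z := h x y z y

end IsDifunctional

theorem statement18_general {X L : Type*} [SemilatticeInf L] [OrderTop L] {r : X → X → L}
    (hrefl : ∀ x, r x x = ⊤) :
    IsDifunctional r ↔ (∀ x y, r x y = r y x) ∧ ∀ x y z, r x y ⊓ r y z ≤ r x z :=
  ⟨fun h => ⟨h.symm hrefl, h.trans hrefl⟩, fun h => .of_symm_of_trans h.1 h.2⟩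

/-- The inequality `Y(y₁,y₂') ∧ Y(y₂,y₂') ∧ Y(y₂,y₁') ≤ Y(y₁,y₁')` holds for all
elements iff `Y` is a symmetric `V_∧`-category. -/
theorem statement18 {V : Type w} [CompleteLattice V] (Q : QuantaleStr V)
    (Y : VCatStr.{w, u} Q) :
    (∀ y1 y2 y1' y2' : Y.carrier,
        Y.hom y1 y2' ⊓ Y.hom y2 y2' ⊓ Y.hom y2 y1' ≤ Y.hom y1 y1') ↔
      IsSymmetricVMeetCat Y :=
  statement18_general fun x => top_le_iff.mp (Y.refl_le x)
end
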